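/- The Dougall-type series Ω(3/2, 1/2, 1, 1, 1) = ∑_{k=0}^∞ ((1/2)_k (1)_k^3 / ((2)_k (3/2)_k^3)) · (3/2 + 2k) converges and equals (7/4)·ζ(3). -/

import Mathlib

noncomputable def poch (x : ℝ) (n : ℕ) : ℝ := ∏ i ∈ Finset.range n, (x + i)

noncomputable def zeta3 : ℝ := ∑' n : ℕ, 1 / ((n : ℝ) + 1) ^ 3

/-!
The argument is a Wilf–Zeilberger pair. Divided by `x ^ 3`, the terms `F x k` of
`Ω(x + 1, x, 1, 1, 1)` have a mate `G x k` with `F x k - F (x + 1) k = G x k - G x (k + 1)` and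
`G x 0 = 2 / x ^ 3`. Summing this identity over `x, x + 1, x + 2, …` and then over `k` exchanges
`∑ k, F x k` for `∑ n, G (x + n) 0`, which is `2 ζ(3, x)` for the Hurwitz zeta function; at
`x = 1 / 2` that is `14 ζ(3)`.
-/

open Filter Topology

theorem hasSum_of_wilfZeilberger {F G : ℕ → ℕ → ℝ}
    (hFG : ∀ n k, F n k - F (n + 1) k = G n k - G n (k + 1))
    (hF_nonneg : ∀ k, 0 ≤ F 0 k)
    (hF_tendsto : ∀ k, Tendsto (F · k) atTop (𝓝 0))
    (hG_summable : ∀ k, Summable (G · k))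
    (hG_tendsto : Tendsto (fun k ↦ ∑' n, G n k) atTop (𝓝 0)) :
    HasSum (F 0) (∑' n, G n 0) := by
  have hF_eq (k : ℕ) : F 0 k = ∑' n, G n k - ∑' n, G n (k + 1) := by
    have hG_partial := ((hG_summable k).hasSum.sub (hG_summable (k + 1)).hasSum).tendsto_sum_nat
    simp only [← hFG, Finset.sum_range_sub'] at hG_partial
    have hF_partial := (hF_tendsto k).const_sub (F 0 k)
    rw [sub_zero] at hF_partial
    exact tendsto_nhds_unique hF_partial hG_partial
  rw [hasSum_iff_tendsto_nat_of_nonneg hF_nonneg]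
  simp only [hF_eq, Finset.sum_range_sub' (fun k ↦ ∑' n, G n k)]
  simpa only [sub_zero] using hG_tendsto.const_sub (∑' n, G n 0)

theorem summable_one_div_add_nat_pow (x : ℝ) {s : ℕ} (hs : 1 < s) :
    Summable fun n : ℕ ↦ 1 / (x + n) ^ s := by
  refine .of_norm (((Real.summable_one_div_nat_add_rpow x s).2 (by exact_mod_cast hs)).congr ?_)
  intro n
  rw [Real.rpow_natCast, norm_div, norm_one, norm_pow, Real.norm_eq_abs, add_comm]

theorem tsum_one_div_half_add_nat_pow {s : ℕ} (hs : 1 < s) :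
    ∑' n : ℕ, 1 / ((1 / 2 : ℝ) + n) ^ s = (2 ^ s - 1) * ∑' n : ℕ, 1 / ((n : ℝ) + 1) ^ s := by
  let f (n : ℕ) : ℝ := 1 / ((n : ℝ) + 1) ^ s
  have hf : Summable f := by
    simpa only [f, add_comm] using summable_one_div_add_nat_pow 1 hs
  have hf_even (n : ℕ) : f (2 * n) = (1 / 2 ^ s) * (1 / ((1 / 2 : ℝ) + n) ^ s) := by
    rw [one_div_mul_one_div, ← mul_pow]
    simp only [f]
    push_cast
    ring_nf
  have hf_odd (n : ℕ) : f (2 * n + 1) = (1 / 2 ^ s) * f n := by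
    simp only [f]
    rw [one_div_mul_one_div, ← mul_pow]
    push_cast
    ring_nf
  have hsplit : ∑' n, f (2 * n) + ∑' n, f (2 * n + 1) = ∑' n, f n :=
    tsum_even_add_odd (hf.comp_injective fun _ _ h ↦ by simpa using h)
      (hf.comp_injective fun _ _ h ↦ by simpa using h)
  simp only [hf_even, hf_odd, tsum_mul_left] at hsplit
  rw [← mul_add, one_div_mul_eq_div, div_eq_iff (by positivity)] at hsplit
  linear_combination hsplit

section Pochhammer

theorem poch_pos {x : ℝ} (hx : 0 < x) (k : ℕ) : 0 < poch x k :=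
  Finset.prod_pos fun _ _ ↦ by positivity

theorem poch_succ (x : ℝ) (k : ℕ) : poch x (k + 1) = poch x k * (x + k) :=
  Finset.prod_range_succ _ _

theorem poch_succ_left (x : ℝ) (k : ℕ) : poch x (k + 1) = x * poch (x + 1) k := by
  rw [poch, Finset.prod_range_succ', mul_comm, poch]
  push_cast
  simp only [add_zero, add_assoc, add_comm (1 : ℝ)]

theorem poch_add_one {x : ℝ} (hx : x ≠ 0) (k : ℕ) : poch (x + 1) k = poch x k * (x + k) / x := by
  rw [eq_div_iff hx, mul_comm, ← poch_succ_left, poch_succ]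

theorem poch_one (k : ℕ) : poch 1 k = k.factorial := by
  rw [← Finset.prod_range_add_one_eq_factorial, poch]
  push_cast
  simp only [add_comm]

theorem poch_le_poch {x y : ℝ} (hx : 0 ≤ x) (hxy : x ≤ y) (k : ℕ) : poch x k ≤ poch y k :=
  Finset.prod_le_prod (fun _ _ ↦ by positivity) fun _ _ ↦ by gcongr

end Pochhammer

/-- The reciprocal `k! / ((x + 1) ⋯ (x + k))` of the generalized binomial coefficient
`(x + k).choose k`, the common hypergeometric factor of both members of the
Wilf–Zeilberger pair. -/
noncomputable def invChoose (x : ℝ) (k : ℕ) : ℝ := poch 1 k / poch (x + 1) k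

section invChoose

variable {x : ℝ}

theorem invChoose_zero (x : ℝ) : invChoose x 0 = 1 := by
  simp [invChoose, poch]

theorem invChoose_succ (x : ℝ) (k : ℕ) :
    invChoose x (k + 1) = invChoose x k * ((k + 1) / (x + 1 + k)) := by
  rw [invChoose, poch_succ, poch_succ, mul_div_mul_comm, add_comm 1 (k : ℝ), invChoose]

theorem invChoose_add_one (hx : x + 1 ≠ 0) (k : ℕ) :
    invChoose (x + 1) k = invChoose x k * ((x + 1) / (x + 1 + k)) := by
  rw [invChoose, poch_add_one hx, invChoose, div_mul_div_comm, div_div_eq_mul_div]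

theorem invChoose_nonneg (hx : 0 ≤ x) (k : ℕ) : 0 ≤ invChoose x k :=
  div_nonneg (poch_pos one_pos k).le (poch_pos (by positivity) k).le

theorem invChoose_le_one (hx : 0 ≤ x) (k : ℕ) : invChoose x k ≤ 1 :=
  div_le_one_of_le₀ (poch_le_poch zero_le_one (by linarith) k) (poch_pos (by positivity) k).le

theorem invChoose_eq_gammaSeq (hx : 0 < x) {k : ℕ} (hk : k ≠ 0) :
    invChoose x k = x * Real.GammaSeq x k * (k : ℝ) ^ (-x) := by
  have hprod : ∏ j ∈ Finset.range (k + 1), (x + j) = x * poch (x + 1) k := poch_succ_left x k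
  have hpoch := (poch_pos (x := x + 1) (by positivity) k).ne'
  have hpow : (k : ℝ) ^ x ≠ 0 := by positivity
  rw [invChoose, Real.GammaSeq, hprod, poch_one, Real.rpow_neg (by positivity)]
  field_simp

theorem tendsto_invChoose_atTop (hx : 0 < x) : Tendsto (invChoose x) atTop (𝓝 0) := by
  have hpow : Tendsto (fun k : ℕ ↦ (k : ℝ) ^ (-x)) atTop (𝓝 0) :=
    (tendsto_rpow_neg_atTop hx).comp tendsto_natCast_atTop_atTop
  have hlim := ((Real.GammaSeq_tendsto_Gamma x).const_mul x).mul hpow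
  rw [mul_zero] at hlim
  refine hlim.congr' ?_
  filter_upwards [eventually_ne_atTop 0] with k hk
  exact (invChoose_eq_gammaSeq hx hk).symm

end invChoose

/-- The first member `F x k` of the Wilf–Zeilberger pair: the `k`-th term of
`Ω(x + 1, x, 1, 1, 1)`, divided by `x ^ 3`. -/
noncomputable def wzTerm (x : ℝ) (k : ℕ) : ℝ :=
  invChoose x k ^ 2 * (1 / (k + 1) + 1 / (x + k)) / x ^ 2

/-- The second member `G x k` of the Wilf–Zeilberger pair, the mate of `wzTerm`. -/
noncomputable def wzMate (x : ℝ) (k : ℕ) : ℝ :=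
  invChoose x k ^ 2 * (1 + x / (x + k)) / x ^ 3

section WilfZeilberger

variable {x : ℝ}

theorem dougallTerm_eq_wzTerm (hx : 0 < x) (k : ℕ) :
    poch x k * poch 1 k ^ 3 / (poch 2 k * poch (x + 1) k ^ 3) * (x + 1 + 2 * k) =
      x ^ 3 * wzTerm x k := by
  have hpoch_x := (poch_pos hx k).ne'
  have hpoch_one := (poch_pos one_pos k).ne'
  rw [wzTerm, invChoose, ← one_add_one_eq_two, poch_add_one one_ne_zero, poch_add_one hx.ne']
  field_simp
  ring

theorem wzTerm_sub_wzTerm_add_one (hx : 0 < x) (k : ℕ) :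
    wzTerm x k - wzTerm (x + 1) k = wzMate x k - wzMate x (k + 1) := by
  rw [wzTerm, wzTerm, wzMate, wzMate, invChoose_add_one (by positivity), invChoose_succ]
  push_cast
  rw [← add_assoc x, add_right_comm x (k : ℝ) 1]
  field_simp
  ring

theorem wzTerm_nonneg (hx : 0 < x) (k : ℕ) : 0 ≤ wzTerm x k := by
  rw [wzTerm]
  positivity

theorem wzTerm_le (hx : 0 < x) (k : ℕ) : wzTerm x k ≤ (1 + 1 / x) / x ^ 2 := by
  have hsq : invChoose x k ^ 2 ≤ 1 :=
    pow_le_one₀ (invChoose_nonneg hx.le k) (invChoose_le_one hx.le k)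
  have hk : 1 / ((k : ℝ) + 1) ≤ 1 := div_le_one_of_le₀ (by simp) (by positivity)
  have hxk : 1 / (x + k) ≤ 1 / x := by gcongr; simp
  rw [wzTerm]
  gcongr
  calc invChoose x k ^ 2 * (1 / (k + 1) + 1 / (x + k))
      ≤ 1 * (1 + 1 / x) := by gcongr
    _ = 1 + 1 / x := one_mul _

theorem tendsto_wzTerm_atTop (k : ℕ) : Tendsto (wzTerm · k) atTop (𝓝 0) := by
  have hinv : Tendsto (fun x : ℝ ↦ 1 + 1 / x) atTop (𝓝 (1 + 0)) :=
    (tendsto_const_nhds.div_atTop tendsto_id).const_add 1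
  refine squeeze_zero' ?_ ?_ (hinv.div_atTop (tendsto_pow_atTop two_ne_zero))
  · filter_upwards [eventually_gt_atTop 0] with x hx using wzTerm_nonneg hx k
  · filter_upwards [eventually_gt_atTop 0] with x hx using wzTerm_le hx k

theorem wzMate_zero (hx : x ≠ 0) : wzMate x 0 = 2 * (1 / x ^ 3) := by
  rw [wzMate, invChoose_zero, Nat.cast_zero, add_zero, div_self hx]
  ring

theorem wzMate_nonneg (hx : 0 < x) (k : ℕ) : 0 ≤ wzMate x k := by
  rw [wzMate]
  positivity

theorem wzMate_le_invChoose_sq (hx : 0 < x) (k : ℕ) :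
    wzMate x k ≤ invChoose x k ^ 2 * (2 * (1 / x ^ 3)) := by
  have hratio : x / (x + k) ≤ 1 := div_le_one_of_le₀ (by simp) (by positivity)
  calc wzMate x k ≤ invChoose x k ^ 2 * (1 + 1) / x ^ 3 := by rw [wzMate]; gcongr
    _ = invChoose x k ^ 2 * (2 * (1 / x ^ 3)) := by ring

theorem norm_wzMate_le (hx : 0 < x) (k : ℕ) : ‖wzMate x k‖ ≤ 2 * (1 / x ^ 3) := by
  rw [Real.norm_of_nonneg (wzMate_nonneg hx k)]
  exact (wzMate_le_invChoose_sq hx k).trans <| mul_le_of_le_one_left (by positivity) <|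
    pow_le_one₀ (invChoose_nonneg hx.le k) (invChoose_le_one hx.le k)

theorem tendsto_wzMate_atTop (hx : 0 < x) : Tendsto (wzMate x) atTop (𝓝 0) := by
  have hbound := ((tendsto_invChoose_atTop hx).pow 2).mul_const (2 * (1 / x ^ 3))
  rw [zero_pow two_ne_zero, zero_mul] at hbound
  exact squeeze_zero (wzMate_nonneg hx) (wzMate_le_invChoose_sq hx) hbound

theorem hasSum_wzTerm (hx : 0 < x) :
    HasSum (wzTerm x) (2 * ∑' n : ℕ, 1 / (x + n) ^ 3) := by
  have hpos (n : ℕ) : 0 < x + n := by positivity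
  have hbound_summable : Summable fun n : ℕ ↦ 2 * (1 / (x + n) ^ 3) :=
    (summable_one_div_add_nat_pow x (by norm_num)).mul_left 2
  have hmate_tendsto : Tendsto (fun k ↦ ∑' n : ℕ, wzMate (x + n) k) atTop (𝓝 0) := by
    simpa only [tsum_zero] using tendsto_tsum_of_dominated_convergence hbound_summable
      (fun n ↦ tendsto_wzMate_atTop (hpos n)) (.of_forall fun k n ↦ norm_wzMate_le (hpos n) k)
  have hsum := hasSum_of_wilfZeilberger (F := fun n ↦ wzTerm (x + n)) (G := fun n ↦ wzMate (x + n))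
    (fun n k ↦ by
      rw [Nat.cast_succ, ← add_assoc]
      exact wzTerm_sub_wzTerm_add_one (hpos n) k)
    (wzTerm_nonneg (hpos 0))
    (fun k ↦ (tendsto_wzTerm_atTop k).comp
      (tendsto_atTop_add_const_left _ x tendsto_natCast_atTop_atTop))
    (fun k ↦ .of_norm_bounded hbound_summable fun n ↦ norm_wzMate_le (hpos n) k)
    hmate_tendsto
  simpa only [wzMate_zero (hpos _).ne', tsum_mul_left, Nat.cast_zero, add_zero] using hsum

end WilfZeilberger

theorem stmt4_general {x : ℝ} (hx : 0 < x) :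
    HasSum (fun k : ℕ =>
      poch x k * poch 1 k ^ 3 / (poch 2 k * poch (x + 1) k ^ 3) * (x + 1 + 2 * k))
      (2 * x ^ 3 * ∑' n : ℕ, 1 / (x + n) ^ 3) := by
  simp only [dougallTerm_eq_wzTerm hx]
  rw [mul_comm 2, mul_assoc]
  exact (hasSum_wzTerm hx).mul_left (x ^ 3)

theorem stmt4 :
    HasSum (fun k : ℕ =>
      poch (1/2) k * poch 1 k ^ 3 / (poch 2 k * poch (3/2) k ^ 3) *
        ((3:ℝ)/2 + 2 * k))
      (7/4 * zeta3) := by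
  convert stmt4_general one_half_pos using 1
  · norm_num
  · rw [tsum_one_div_half_add_nat_pow (by norm_num), zeta3]
    ring
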